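/- arXiv:2207.10590 — 3 statements merged into one kernel-verified Lean document; each statement's English description precedes it below -/
import Mathlib

section
/- Let X be a standard Borel space and R an equivalence relation on X whose graph is a Borel subset of X × X. Then for probability measures μ, ν on X, μ ΓR ν holds if and only if μ ΘR ν holds, i.e., the two relation liftings Γ (agreement on R-closed measurable sets) and Θ (existence of a coupling concentrated on R) coincide for Borel equivalence relations. -/
open MeasureTheory

/-- A set `A` is `r`-closed when it is closed under the relation `r`. -/
def RClosed {X : Type*} (r : X → X → Prop) (A : Set X) : Prop :=
  ∀ ⦃x⦄, x ∈ A → ∀ ⦃y⦄, r x y → y ∈ A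

/-- The probabilistic relation lifting `Γ`. -/
def GammaRel {X : Type*} [MeasurableSpace X] (r : X → X → Prop) (μ ν : Measure X) : Prop :=
  ∀ A : Set X, MeasurableSet A → RClosed r A → μ A = ν A

open Filter Topology Set

/-- `A₁ × X ∪ X × A₂` covers `B`. -/
def GCov {X : Type*} [MeasurableSpace X] (B : Set (X × X)) (A C : Set X) : Prop :=
  MeasurableSet A ∧ MeasurableSet C ∧ ∀ p ∈ B, p.1 ∈ A ∨ p.2 ∈ C

/-- The cover functional. -/
noncomputable def gD {X : Type*} [MeasurableSpace X] (μ ν : Measure X) (B : Set (X × X)) : ℝ :=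
  sInf {c | ∃ A C, GCov B A C ∧ c = μ.real A + ν.real C}

lemma gD_le {X : Type*} [MeasurableSpace X] {μ ν : Measure X} {B : Set (X × X)} {A C : Set X}
    (h : GCov B A C) : gD μ ν B ≤ μ.real A + ν.real C :=
  csInf_le ⟨0, by rintro c ⟨A, C, -, rfl⟩; positivity⟩ ⟨A, C, h, rfl⟩

lemma gD_exists {X : Type*} [MeasurableSpace X] {μ ν : Measure X} {B : Set (X × X)} {c : ℝ}
    (h : gD μ ν B < c) : ∃ A C, GCov B A C ∧ μ.real A + ν.real C < c := by
  have hne : {c | ∃ A C, GCov B A C ∧ c = μ.real A + ν.real C}.Nonempty :=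
    ⟨_, univ, univ, ⟨MeasurableSet.univ, MeasurableSet.univ, by simp⟩, rfl⟩
  obtain ⟨_, ⟨A, C, h1, rfl⟩, h2⟩ := exists_lt_of_csInf_lt hne h
  exact ⟨A, C, h1, h2⟩

lemma gD_mono {X : Type*} [MeasurableSpace X] {μ ν : Measure X} {B B' : Set (X × X)}
    (h : B ⊆ B') : gD μ ν B ≤ gD μ ν B' := by
  by_contra! hc
  obtain ⟨A, C, h1, h2⟩ := gD_exists hc
  exact absurd (gD_le (μ := μ) (ν := ν) (B := B) ⟨h1.1, h1.2.1, fun p hp => h1.2.2 p (h hp)⟩)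
    (not_le.2 h2)

/-- finite unions -/
def gU {X : Type*} (A : ℕ → Set X) : ℕ → ℕ → Set X
  | 0, n => A n
  | N + 1, n => A n ∪ gU A N (n + 1)

/-- finite intersections -/
def gI {X : Type*} (A : ℕ → Set X) : ℕ → ℕ → Set X
  | 0, n => A n
  | N + 1, n => A n ∩ gI A N (n + 1)

lemma gU_sub {X : Type*} (A : ℕ → Set X) (N n m : ℕ) (h : m ≤ N) : A (n + m) ⊆ gU A N n := by
  induction N generalizing n m with
  | zero => obtain rfl : m = 0 := by omega
            exact subset_rfl
  | succ N ih =>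
    rcases m with _ | m
    · exact subset_union_left
    · refine subset_union_of_subset_right ?_ _
      have := ih (n + 1) m (by omega)
      rwa [show n + 1 + m = n + (m + 1) by ring] at this

lemma gU_mono {X : Type*} (A : ℕ → Set X) (N n : ℕ) : gU A N n ⊆ gU A (N + 1) n := by
  induction N generalizing n with
  | zero => exact subset_union_left
  | succ N ih => exact union_subset_union_right _ (ih _)

lemma gI_sup {X : Type*} (A : ℕ → Set X) (N n : ℕ) : (⋂ m, A (n + m)) ⊆ gI A N n := by
  induction N generalizing n with
  | zero => exact iInter_subset (fun m => A (n + m)) 0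
  | succ N ih =>
    refine subset_inter (iInter_subset (fun m => A (n + m)) 0) (subset_trans ?_ (ih (n + 1)))
    refine subset_iInter fun m => ?_
    have := iInter_subset (fun m => A (n + m)) (m + 1)
    rwa [show n + (m + 1) = n + 1 + m by ring] at this

lemma gD_seq {X : Type*} [MeasurableSpace X] {μ ν : Measure X} [IsFiniteMeasure μ]
    [IsFiniteMeasure ν] {B : ℕ → Set (X × X)} (hB : Monotone B) {c e : ℝ} (he : 0 ≤ e)
    (h1 : ∀ n, c - e * (1/2)^n ≤ gD μ ν (B n)) (h2 : ∀ n, gD μ ν (B n) < c + e * (1/2)^n) :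
    gD μ ν (⋃ n, B n) ≤ c := by
  choose A C hAC hc using fun n => gD_exists (h2 n)
  have key : ∀ N n, GCov (B n) (gU A N n) (gI C N n) ∧
      μ.real (gU A N n) + ν.real (gI C N n) ≤ c + 4 * (e * (1/2)^n) := by
    intro N
    induction N with
    | zero =>
      intro n
      refine ⟨hAC n, ?_⟩
      have := hc n
      have : 0 ≤ e * (1/2)^n := by positivity
      simp only [gU, gI]; linarith
    | succ N ih =>
      intro n
      obtain ⟨⟨m1, m2, hcov⟩, hle⟩ := ih (n + 1)
      obtain ⟨m3, m4, hcov'⟩ := hAC n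
      have hsub : B n ⊆ B (n + 1) := hB (Nat.le_succ n)
      refine ⟨⟨m3.union m1, m4.inter m2, ?_⟩, ?_⟩
      · intro p hp
        have a1 := hcov p (hsub hp)
        have a2 := hcov' p hp
        simp only [gU, gI, mem_union, mem_inter_iff]; tauto
      · have hc2 : GCov (B n) (A n ∩ gU A N (n+1)) (C n ∪ gI C N (n+1)) := by
          refine ⟨m3.inter m1, m4.union m2, ?_⟩
          intro p hp
          have a1 := hcov p (hsub hp)
          have a2 := hcov' p hp
          simp only [mem_union, mem_inter_iff]; tauto
        have b1 := gD_le (μ := μ) (ν := ν) hc2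
        have b2 := measureReal_union_add_inter (μ := μ) (s := A n) m1
        have b3 := measureReal_union_add_inter (μ := ν) (s := C n) m2
        have b4 := h1 n
        have b5 := hc n
        simp only [gU, gI]
        rw [pow_succ] at hle
        linarith
  have key2 : ∀ n, μ.real (⋃ m, A (n + m)) + ν.real (⋂ m, C (n + m)) ≤
      c + 4 * (e * (1/2)^n) := by
    intro n
    have t : Tendsto (fun N => μ.real (gU A N n)) atTop (𝓝 (μ.real (⋃ N, gU A N n))) := by
      refine (ENNReal.tendsto_toReal (measure_ne_top _ _)).comp
        (tendsto_measure_iUnion_atTop (monotone_nat_of_le_succ fun N => gU_mono A N n))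
    have s1 : μ.real (⋃ m, A (n + m)) ≤ μ.real (⋃ N, gU A N n) :=
      measureReal_mono (iUnion_mono fun m => gU_sub A m n m le_rfl)
    have s2 : μ.real (⋃ N, gU A N n) ≤ c + 4 * (e * (1/2)^n) - ν.real (⋂ m, C (n + m)) := by
      refine le_of_tendsto' t fun N => ?_
      have := (key N n).2
      have : ν.real (⋂ m, C (n + m)) ≤ ν.real (gI C N n) := measureReal_mono (gI_sup C N n)
      linarith
    linarith
  have cov : GCov (⋃ n, B n) (⋂ n, ⋃ m, A (n + m)) (⋃ n, ⋂ m, C (n + m)) := by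
    refine ⟨.iInter fun n => .iUnion fun m => (hAC _).1,
      .iUnion fun n => .iInter fun m => (hAC _).2.1, ?_⟩
    intro p hp
    obtain ⟨k, hk⟩ := mem_iUnion.1 hp
    by_contra! hcon
    obtain ⟨hcon1, hcon2⟩ := hcon
    simp only [mem_iInter, mem_iUnion, not_forall, not_exists] at hcon1 hcon2
    obtain ⟨n, hn⟩ := hcon1
    obtain ⟨m, hm⟩ := hcon2 (n + k)
    have := (hAC (n + k + m)).2.2 p (hB (by omega) hk)
    rcases this with h | h
    · exact hn (k + m) (by rwa [← add_assoc])
    · exact hm h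
  refine (gD_le cov).trans ?_
  have t1 : Tendsto (fun n => ν.real (⋂ m, C (n + m))) atTop
      (𝓝 (ν.real (⋃ n, ⋂ m, C (n + m)))) := by
    refine (ENNReal.tendsto_toReal (measure_ne_top _ _)).comp
      (tendsto_measure_iUnion_atTop (monotone_nat_of_le_succ fun n => ?_))
    refine subset_iInter fun m => ?_
    have := iInter_subset (fun m => C (n + m)) (m + 1)
    rwa [show n + (m + 1) = n + 1 + m by ring] at this
  have t2 : Tendsto (fun n : ℕ => c + 4 * (e * (1/2)^n)) atTop (𝓝 c) := by
    have := tendsto_pow_atTop_nhds_zero_of_lt_one (r := (1/2 : ℝ)) (by norm_num) (by norm_num)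
    simpa using ((this.const_mul e).const_mul 4).const_add c
  refine le_of_tendsto_of_tendsto' (t1.const_add _) t2 fun n => ?_
  refine le_trans ?_ (key2 n)
  have : μ.real (⋂ n, ⋃ m, A (n + m)) ≤ μ.real (⋃ m, A (n + m)) :=
    measureReal_mono (iInter_subset _ n)
  linarith

lemma gD_iUnion {X : Type*} [MeasurableSpace X] {μ ν : Measure X} [IsFiniteMeasure μ]
    [IsFiniteMeasure ν] {B : ℕ → Set (X × X)} (hB : Monotone B) {c : ℝ}
    (h : c < gD μ ν (⋃ n, B n)) : ∃ n, c < gD μ ν (B n) := by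
  by_contra! hc
  have hbdd : BddAbove (range fun n => gD μ ν (B n)) := ⟨c, by rintro _ ⟨n, rfl⟩; exact hc n⟩
  have hmono : Monotone fun n => gD μ ν (B n) := fun m n h => gD_mono (hB h)
  have ht := tendsto_atTop_ciSup hmono hbdd
  set s := ⨆ n, gD μ ν (B n) with hs
  have hsc : s ≤ c := ciSup_le hc
  obtain ⟨φ, hφ, hφ2⟩ := extraction_forall_of_eventually
    (P := fun n k => s - 1 * (1/2)^n ≤ gD μ ν (B k)) (fun n => by
      have : s - 1 * (1/2)^n < s := by
        have : (0:ℝ) < (1/2)^n := by positivity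
        linarith
      exact (Filter.Tendsto.eventually_const_lt this ht).mono fun k hk => hk.le)
  have := gD_seq (μ := μ) (ν := ν) (B := fun n => B (φ n)) (hB.comp hφ.monotone) (c := s)
    zero_le_one hφ2 (fun n => by
      have : gD μ ν (B (φ n)) ≤ s := le_ciSup hbdd (φ n)
      have : (0:ℝ) < (1/2)^n := by positivity
      linarith)
  have hU : (⋃ n, B n) ⊆ ⋃ n, B (φ n) :=
    iUnion_subset fun n => subset_iUnion_of_subset n (hB hφ.le_apply)
  linarith [gD_mono (μ := μ) (ν := ν) hU]

/-- cylinders -/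
def gCyl (n : ℕ → ℕ) (k : ℕ) : Set (ℕ → ℕ) := {x | ∀ i < k, x i ≤ n i}

lemma gCyl_tube (n : ℕ → ℕ) (U : Set (ℕ → ℕ)) (hU : IsOpen U)
    (h : {x | ∀ i, x i ≤ n i} ⊆ U) : ∃ k, gCyl n k ⊆ U := by
  by_contra! hc
  choose x hx hxU using fun k => not_subset.1 (hc k)
  have hK : IsCompact {x : ℕ → ℕ | ∀ i, x i ≤ n i} := by
    have : {x : ℕ → ℕ | ∀ i, x i ≤ n i} = Set.pi univ fun i => Set.Iic (n i) := by
      ext; simp [Pi.le_def]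
    rw [this]
    exact isCompact_univ_pi fun i => (Set.finite_Iic _).isCompact
  let y : ℕ → ℕ → ℕ := fun k i => if i < k then x k i else 0
  have hy : ∀ k, y k ∈ {x : ℕ → ℕ | ∀ i, x i ≤ n i} := by
    intro k i
    by_cases hi : i < k
    · simp [y, hi]; exact hx k i hi
    · simp [y, hi]
  obtain ⟨z, hz, φ, hφ, ht⟩ := hK.tendsto_subseq hy
  have ht2 : Tendsto (fun k => x (φ k)) atTop (𝓝 z) := by
    rw [tendsto_pi_nhds] at ht ⊢
    intro i
    refine (ht i).congr' ?_
    filter_upwards [eventually_gt_atTop i] with k hk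
    have : i < φ k := lt_of_lt_of_le hk hφ.le_apply
    simp [y, this]
  obtain ⟨k, hk⟩ := (ht2.eventually (hU.mem_nhds (h hz))).exists
  exact hxU _ hk

lemma gD_compact {X : Type*} [TopologicalSpace X] [PolishSpace X] [MeasurableSpace X]
    [BorelSpace X] {μ ν : Measure X} [IsFiniteMeasure μ]
    [IsFiniteMeasure ν] {B : Set (X × X)} (hB : AnalyticSet B) (h : 0 < gD μ ν B) :
    ∃ K ⊆ B, IsCompact K ∧ 0 < gD μ ν K := by
  rw [AnalyticSet] at hB
  rcases hB with rfl | ⟨f, hf, rfl⟩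
  · have := gD_le (μ := μ) (ν := ν) (B := ∅) (A := ∅) (C := ∅) ⟨.empty, .empty, by simp⟩
    simp at this; linarith
  obtain ⟨δ, hδ, hδ2⟩ := exists_between h
  have step : ∀ S : Set (ℕ → ℕ), ∀ k, δ < gD μ ν (f '' S) →
      ∃ m, δ < gD μ ν (f '' (S ∩ {x | x k ≤ m})) := by
    intro S k hS
    refine gD_iUnion (B := fun m => f '' (S ∩ {x | x k ≤ m})) ?_ ?_
    · intro m m' hm
      exact image_mono (inter_subset_inter_right _ fun x hx => le_trans hx hm)
    · rw [← image_iUnion, ← inter_iUnion]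
      have : (⋃ m, {x : ℕ → ℕ | x k ≤ m}) = univ := by
        ext x; simp only [mem_iUnion, mem_ofPred_eq, mem_univ, iff_true]; exact ⟨_, le_rfl⟩
      rwa [this, inter_univ]
  choose! g hg using step
  let S : ℕ → Set (ℕ → ℕ) := fun k => Nat.rec univ (fun k S => S ∩ {x | x k ≤ g S k}) k
  have hS0 : S 0 = univ := rfl
  have hS1 : ∀ k, S (k + 1) = S k ∩ {x | x k ≤ g (S k) k} := fun k => rfl
  let n : ℕ → ℕ := fun k => g (S k) k
  have hSn : ∀ k, S k = gCyl n k := by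
    intro k
    induction k with
    | zero => simp [hS0, gCyl]
    | succ k ih =>
      have e1 : S (k + 1) = gCyl n k ∩ {x | x k ≤ n k} := by rw [hS1, ← ih]
      rw [e1]
      ext x
      simp only [gCyl, mem_inter_iff, mem_ofPred_eq, Nat.lt_succ_iff_lt_or_eq]
      constructor
      · rintro ⟨h1, h2⟩ i (hi | rfl)
        exacts [h1 i hi, h2]
      · intro h; exact ⟨fun i hi => h i (.inl hi), h k (.inr rfl)⟩
  have hSd : ∀ k, δ < gD μ ν (f '' S k) := by
    intro k
    induction k with
    | zero => rwa [hS0, image_univ]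
    | succ k ih => rw [hS1]; exact hg _ _ ih
  refine ⟨f '' {x | ∀ i, x i ≤ n i}, image_subset_range _ _, ?_, ?_⟩
  · have : {x : ℕ → ℕ | ∀ i, x i ≤ n i} = Set.pi univ fun i => Set.Iic (n i) := by
      ext; simp [Pi.le_def]
    rw [this]
    exact (isCompact_univ_pi fun i => (Set.finite_Iic _).isCompact).image hf
  · refine hδ.trans_le ?_
    by_contra! hc
    obtain ⟨A, C, hAC, hlt⟩ := gD_exists hc
    set e := (δ - (μ.real A + ν.real C)) / 2 with he
    have hepos : 0 < e := by linarith
    have open_ext : ∀ (m : Measure X) [IsFiniteMeasure m] (A : Set X),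
        ∃ U ⊇ A, IsOpen U ∧ m.real U < m.real A + e := by
      intro m _ A
      obtain ⟨U, h1, h2, h3⟩ := A.exists_isOpen_lt_add (μ := m) (measure_ne_top _ _)
        (ε := ENNReal.ofReal e) (by simpa using hepos)
      refine ⟨U, h1, h2, ?_⟩
      have := (ENNReal.toReal_lt_toReal (measure_ne_top _ _) (by finiteness)).2 h3
      rwa [ENNReal.toReal_add (by finiteness) (by finiteness), ENNReal.toReal_ofReal hepos.le]
        at this
    obtain ⟨U, hAU, hU, hUe⟩ := open_ext μ A
    obtain ⟨V, hCV, hV, hVe⟩ := open_ext ν C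
    have hO : IsOpen {p : X × X | p.1 ∈ U ∨ p.2 ∈ V} :=
      (hU.preimage continuous_fst).union (hV.preimage continuous_snd)
    obtain ⟨k, hk⟩ := gCyl_tube n _ (hO.preimage hf) (by
      intro x hx
      exact (hAC.2.2 _ (mem_image_of_mem _ hx)).imp (fun h => hAU h) (fun h => hCV h))
    have := gD_le (μ := μ) (ν := ν) (B := f '' S k) (A := U) (C := V)
      ⟨hU.measurableSet, hV.measurableSet, by
        rintro _ ⟨x, hx, rfl⟩
        rw [hSn] at hx
        exact hk hx⟩
    linarith [hSd k]

open scoped BoundedContinuousFunction CompactlySupported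

lemma measure_le_of_bcf {X : Type*} [TopologicalSpace X] [PolishSpace X] [MeasurableSpace X]
    [BorelSpace X] {μ η : Measure X} [IsFiniteMeasure μ] [IsFiniteMeasure η]
    (h : ∀ f : X →ᵇ ℝ, (∀ x, 0 ≤ f x) → ∫ x, f x ∂η ≤ ∫ x, f x ∂μ) : η ≤ μ := by
  have hcl : ∀ F : Set X, IsClosed F → η F ≤ μ F := by
    intro F hF
    refine le_of_tendsto_of_tendsto' (HasOuterApproxClosed.tendsto_lintegral_apprSeq hF η)
      (HasOuterApproxClosed.tendsto_lintegral_apprSeq hF μ) fun n => ?_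
    let g : X →ᵇ ℝ := BoundedContinuousFunction.comp _ NNReal.isometry_coe.lipschitz (hF.apprSeq n)
    have hg := h g (fun x => NNReal.coe_nonneg _)
    have e : ∀ (m : Measure X) [IsFiniteMeasure m],
        ∫⁻ x, hF.apprSeq n x ∂m = ENNReal.ofReal (∫ x, g x ∂m) := by
      intro m _
      rw [ofReal_integral_eq_lintegral_ofReal (g.integrable m)
        (.of_forall fun x => NNReal.coe_nonneg _)]
      refine lintegral_congr fun x => ?_
      simp [g]
    rw [e, e]
    exact ENNReal.ofReal_le_ofReal hg
  refine Measure.le_iff.2 fun s hs => ?_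
  rw [hs.measure_eq_iSup_isClosed_of_ne_top (measure_ne_top _ _)]
  exact iSup₂_le fun F hFs => iSup_le fun hF => (hcl F hF).trans (measure_mono hFs)

lemma exists_coupling_compact {X : Type*} [TopologicalSpace X] [PolishSpace X] [MeasurableSpace X]
    [BorelSpace X] {μ ν : Measure X} [IsFiniteMeasure μ]
    [IsFiniteMeasure ν] {K : Set (X × X)} (hK : IsCompact K) {δ : ℝ} (hδ : 0 < δ)
    (h : ∀ f g : X →ᵇ ℝ, (∀ x, 0 ≤ f x) → (∀ x, 0 ≤ g x) → (∀ p ∈ K, 1 ≤ f p.1 + g p.2) →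
      δ ≤ ∫ x, f x ∂μ + ∫ x, g x ∂ν) :
    ∃ ω : Measure (X × X), ω ≠ 0 ∧ IsFiniteMeasure ω ∧ ω Kᶜ = 0 ∧ ω.fst ≤ μ ∧ ω.snd ≤ ν := by
  have : CompactSpace K := isCompact_iff_compactSpace.1 hK
  let T : C_c(K, ℝ) → Set ℝ := fun u => {c | ∃ f g : X →ᵇ ℝ, (∀ x, 0 ≤ f x) ∧ (∀ x, 0 ≤ g x) ∧
    (∀ p : K, u p ≤ f p.1.1 + g p.1.2) ∧ c = ∫ x, f x ∂μ + ∫ x, g x ∂ν}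
  have hT0 : ∀ u, ∀ c ∈ T u, 0 ≤ c := by
    rintro u c ⟨f, g, hf, hg, -, rfl⟩
    exact add_nonneg (integral_nonneg hf) (integral_nonneg hg)
  have hTb : ∀ u, BddBelow (T u) := fun u => ⟨0, hT0 u⟩
  have hTn : ∀ u, (T u).Nonempty := by
    intro u
    obtain ⟨M, hM⟩ := (isCompact_range u.continuous).bddAbove
    refine ⟨_, BoundedContinuousFunction.const X |M|, 0, fun x => abs_nonneg M, fun x => le_rfl,
      fun p => ?_, rfl⟩
    simpa using (hM ⟨p, rfl⟩).trans (le_abs_self M)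
  let P : C_c(K, ℝ) → ℝ := fun u => sInf (T u)
  have hP0 : ∀ u, 0 ≤ P u := fun u => le_csInf (hTn u) (hT0 u)
  have hPle : ∀ u : C_c(K, ℝ), ∀ f g : X →ᵇ ℝ, (∀ x, 0 ≤ f x) → (∀ x, 0 ≤ g x) →
      (∀ p : K, u p ≤ f p.1.1 + g p.1.2) → P u ≤ ∫ x, f x ∂μ + ∫ x, g x ∂ν :=
    fun u f g h1 h2 h3 => csInf_le (hTb u) ⟨f, g, h1, h2, h3, rfl⟩
  have hom_le : ∀ c : ℝ, 0 < c → ∀ u, P (c • u) ≤ c * P u := by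
    intro c hc u
    rw [← div_le_iff₀' hc]
    refine le_csInf (hTn u) ?_
    rintro _ ⟨f, g, hf, hg, hfg, rfl⟩
    rw [div_le_iff₀' hc]
    refine (hPle (c • u) (c • f) (c • g) (fun x => ?_) (fun x => ?_) (fun p => ?_)).trans ?_
    · exact mul_nonneg hc.le (hf x)
    · exact mul_nonneg hc.le (hg x)
    · have := mul_le_mul_of_nonneg_left (hfg p) hc.le
      simpa [mul_add] using this
    · simp [integral_const_mul, mul_add]
  have hom : ∀ c : ℝ, 0 < c → ∀ u, P (c • u) = c * P u := by
    intro c hc u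
    refine le_antisymm (hom_le c hc u) ?_
    have := hom_le c⁻¹ (inv_pos.2 hc) (c • u)
    rw [smul_smul, inv_mul_cancel₀ hc.ne', one_smul] at this
    rwa [← div_eq_inv_mul, le_div_iff₀' hc] at this
  have hadd : ∀ u v, P (u + v) ≤ P u + P v := by
    intro u v
    rw [← sub_le_iff_le_add]
    refine le_csInf (hTn u) ?_
    rintro _ ⟨f, g, hf, hg, hfg, rfl⟩
    rw [sub_le_comm]
    refine le_csInf (hTn v) ?_
    rintro _ ⟨f', g', hf', hg', hfg', rfl⟩
    rw [sub_le_iff_le_add]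
    refine (hPle (u + v) (f + f') (g + g') (fun x => add_nonneg (hf x) (hf' x))
      (fun x => add_nonneg (hg x) (hg' x)) (fun p => ?_)).trans ?_
    · have := hfg p; have := hfg' p
      simp; linarith
    · simp only [BoundedContinuousFunction.coe_add, Pi.add_apply]
      rw [integral_add (f.integrable _) (f'.integrable _),
        integral_add (g.integrable _) (g'.integrable _)]
      linarith
  let one : C_c(K, ℝ) := CompactlySupportedContinuousMap.continuousMapEquiv (1 : C(K, ℝ))
  have hone : ∀ p, one p = 1 := fun p => rfl
  have hP1 : δ ≤ P one := by
    refine le_csInf (hTn _) ?_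
    rintro _ ⟨f, g, hf, hg, hfg, rfl⟩
    exact h f g hf hg fun p hp => hfg ⟨p, hp⟩
  have hPz : P 0 = 0 := le_antisymm (by
    simpa using hPle 0 0 0 (fun x => le_rfl) (fun x => le_rfl) (fun p => by simp)) (hP0 0)
  have hone0 : one ≠ 0 := by
    intro h0; rw [h0, hPz] at hP1; linarith
  obtain ⟨L, hL1, hL2⟩ := exists_extension_of_le_sublinear
    (LinearPMap.mkSpanSingleton (σ := RingHom.id ℝ) one (P one) hone0) P hom hadd (by
      rintro ⟨x, hx⟩
      obtain ⟨c, rfl⟩ := Submodule.mem_span_singleton.1 hx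
      rw [LinearPMap.mkSpanSingleton'_apply]
      simp only [RingHom.id_apply, smul_eq_mul]
      rcases lt_trichotomy c 0 with hc | rfl | hc
      · exact (mul_nonpos_of_nonpos_of_nonneg hc.le (hP0 _)).trans (hP0 _)
      · simp [hPz]
      · rw [hom c hc])
  have hLone : L one = P one := by
    have := hL1 ⟨one, Submodule.mem_span_singleton_self one⟩
    rwa [LinearPMap.mkSpanSingleton_apply] at this
  have hLpos : ∀ u, 0 ≤ u → 0 ≤ L u := by
    intro u hu
    have h1 := hL2 (-u)
    have h2 : P (-u) ≤ 0 := by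
      simpa using hPle (-u) 0 0 (fun x => le_rfl) (fun x => le_rfl) (fun p => by
        have : 0 ≤ u p := hu p
        simpa using this)
    rw [map_neg] at h1
    linarith
  let Λ : C_c(K, ℝ) →ₚ[ℝ] ℝ := PositiveLinearMap.mk₀ L hLpos
  let ρ := RealRMK.rieszMeasure Λ
  have hρ : ∀ u : C_c(K, ℝ), ∫ x, u x ∂ρ = L u := RealRMK.integral_rieszMeasure Λ
  have hfin : IsFiniteMeasure ρ := by
    refine ⟨lt_of_le_of_lt (RealRMK.rieszMeasure_le_of_eq_one Λ (f := one) (fun x => ?_)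
      isCompact_univ (fun x _ => hone x)) ENNReal.ofReal_lt_top⟩
    rw [hone]; exact zero_le_one
  have hval : Measurable (Subtype.val : K → X × X) := measurable_subtype_coe
  let toC : C(K, ℝ) → C_c(K, ℝ) := CompactlySupportedContinuousMap.continuousMapEquiv
  refine ⟨ρ.map Subtype.val, ?_, inferInstance, ?_, ?_, ?_⟩
  · intro h0
    rw [Measure.map_eq_zero_iff hval.aemeasurable] at h0
    have := hρ one
    rw [h0, hLone] at this
    simp at this
    linarith
  · rw [Measure.map_apply hval hK.isClosed.measurableSet.compl]
    have : (Subtype.val ⁻¹' Kᶜ : Set K) = ∅ := by ext x; simp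
    rw [this, measure_empty]
  · refine measure_le_of_bcf fun f hf => ?_
    rw [Measure.fst, integral_map measurable_fst.aemeasurable f.continuous.aestronglyMeasurable,
      integral_map hval.aemeasurable
        (Continuous.aestronglyMeasurable (by fun_prop))]
    have e := hρ (toC ⟨fun p => f p.1.1, by fun_prop⟩)
    refine (show _ = _ from e).le.trans ((hL2 _).trans ?_)
    simpa using hPle (toC ⟨fun p => f p.1.1, by fun_prop⟩) f 0 hf (fun _ => le_rfl) (fun p => by
      show f p.1.1 ≤ _
      simp)
  · refine measure_le_of_bcf fun f hf => ?_
    rw [Measure.snd, integral_map measurable_snd.aemeasurable f.continuous.aestronglyMeasurable,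
      integral_map hval.aemeasurable
        (Continuous.aestronglyMeasurable (by fun_prop))]
    have e := hρ (toC ⟨fun p => f p.1.2, by fun_prop⟩)
    refine (show _ = _ from e).le.trans ((hL2 _).trans ?_)
    simpa using hPle (toC ⟨fun p => f p.1.2, by fun_prop⟩) 0 f (fun _ => le_rfl) hf (fun p => by
      show f p.1.2 ≤ _
      simp)

lemma exists_coupling_of_gD_pos {X : Type*} [TopologicalSpace X] [PolishSpace X]
    [MeasurableSpace X] [BorelSpace X] {μ ν : Measure X} [IsFiniteMeasure μ]
    [IsFiniteMeasure ν] {B : Set (X × X)} (hB : AnalyticSet B) (h : 0 < gD μ ν B) :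
    ∃ ω : Measure (X × X), ω ≠ 0 ∧ IsFiniteMeasure ω ∧ ω Bᶜ = 0 ∧ ω.fst ≤ μ ∧ ω.snd ≤ ν := by
  obtain ⟨K, hKB, hK, hpos⟩ := gD_compact hB h
  have key := exists_coupling_compact (μ := μ) (ν := ν) hK (δ := gD μ ν K / 2) (by linarith) (by
    intro f g hf hg hfg
    have h1 := gD_le (μ := μ) (ν := ν) (B := K) (A := {x | 1/2 ≤ f x}) (C := {x | 1/2 ≤ g x})
      ⟨measurableSet_le measurable_const f.continuous.measurable,
        measurableSet_le measurable_const g.continuous.measurable, by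
          intro p hp
          have := hfg p hp
          by_contra! hc
          simp only [mem_ofPred_eq, not_le] at hc
          linarith [hc.1, hc.2]⟩
    have h2 := mul_meas_ge_le_integral_of_nonneg (μ := μ) (.of_forall hf) (f.integrable μ) (1/2)
    have h3 := mul_meas_ge_le_integral_of_nonneg (μ := ν) (.of_forall hg) (g.integrable ν) (1/2)
    linarith)
  obtain ⟨ω, h0, h1, h2, h3⟩ := key
  exact ⟨ω, h0, h1, measure_mono_null (compl_subset_compl.2 hKB) h2, h3⟩

lemma exists_null_cover {X : Type*} [MeasurableSpace X] {μ ν : Measure X} [IsFiniteMeasure μ]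
    [IsFiniteMeasure ν] {B : Set (X × X)} (h : gD μ ν B ≤ 0) :
    ∃ A C, GCov B A C ∧ μ A = 0 ∧ ν C = 0 := by
  choose A C hAC hc using fun n : ℕ => gD_exists (μ := μ) (ν := ν) (B := B) (c := (1/2)^n)
    (lt_of_le_of_lt h (by positivity))
  have hs : Summable fun n : ℕ => (1/2 : ℝ)^n :=
    summable_geometric_of_lt_one (by norm_num) (by norm_num)
  have null : ∀ (m : Measure X) [IsFiniteMeasure m] (S : ℕ → Set X),
      (∀ n, m.real (S n) ≤ (1/2)^n) → m (limsup S atTop) = 0 := by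
    intro m _ S hS
    refine measure_limsup_atTop_eq_zero (ne_top_of_le_ne_top hs.tsum_ofReal_ne_top ?_)
    refine ENNReal.tsum_le_tsum fun n => ?_
    rw [← ofReal_measureReal (measure_ne_top _ _)]
    exact ENNReal.ofReal_le_ofReal (hS n)
  refine ⟨limsup A atTop, limsup C atTop, ⟨.measurableSet_limsup fun n => (hAC n).1,
    .measurableSet_limsup fun n => (hAC n).2.1, ?_⟩, null μ A fun n => ?_, null ν C fun n => ?_⟩
  · intro p hp
    rw [mem_limsup_iff_frequently_mem, mem_limsup_iff_frequently_mem, ← frequently_or_distrib]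
    exact Frequently.of_forall fun n => (hAC n).2.2 p hp
  · have : 0 ≤ ν.real (C n) := measureReal_nonneg
    linarith [hc n]
  · have : 0 ≤ μ.real (A n) := measureReal_nonneg
    linarith [hc n]

lemma exists_invariant_sep {X : Type*} [TopologicalSpace X] [PolishSpace X]
    [MeasurableSpace X] [BorelSpace X] (r : X → X → Prop) (hr : Equivalence r)
    (hBorel : MeasurableSet {p : X × X | r p.1 p.2}) {A C : Set X}
    (h : GCov {p : X × X | r p.1 p.2} A C) :
    ∃ B, MeasurableSet B ∧ RClosed r B ∧ Aᶜ ⊆ B ∧ B ⊆ C := by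
  let sat : Set X → Set X := fun S => {y | ∃ x ∈ S, r x y}
  have hsat : ∀ S, MeasurableSet S → AnalyticSet (sat S) := by
    intro S hS
    have e : sat S = Prod.snd '' ({p : X × X | r p.1 p.2} ∩ Prod.fst ⁻¹' S) := by
      ext y; constructor
      · rintro ⟨x, hx, hxy⟩; exact ⟨(x, y), ⟨hxy, hx⟩, rfl⟩
      · rintro ⟨⟨x, y⟩, ⟨hxy, hx⟩, rfl⟩; exact ⟨x, hx, hxy⟩
    rw [e]
    exact (hBorel.inter (measurable_fst hS)).analyticSet.image_of_continuous continuous_snd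
  have step : ∀ S : {S : Set X // MeasurableSet S ∧ Disjoint S (sat Cᶜ)},
      ∃ S' : {S : Set X // MeasurableSet S ∧ Disjoint S (sat Cᶜ)}, sat S.1 ⊆ S'.1 := by
    rintro ⟨S, hS, hd⟩
    have hd' : Disjoint (sat S) (sat Cᶜ) := by
      rw [Set.disjoint_left] at hd ⊢
      rintro y ⟨x, hx, hxy⟩ ⟨z, hz, hzy⟩
      exact hd hx ⟨z, hz, hr.trans hzy (hr.symm hxy)⟩
    obtain ⟨u, h1, h2, h3⟩ := (hsat S hS).measurablySeparable (hsat _ h.2.1.compl) hd'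
    exact ⟨⟨u, h3, h2.symm⟩, h1⟩
  choose F hF using step
  let S : ℕ → {S : Set X // MeasurableSet S ∧ Disjoint S (sat Cᶜ)} := fun n =>
    Nat.rec ⟨Aᶜ, h.1.compl, by
      rw [Set.disjoint_left]
      rintro y hy ⟨z, hz, hzy⟩
      rcases h.2.2 (y, z) (hr.symm hzy) with h | h
      exacts [hy h, hz h]⟩ (fun _ S => F S) n
  refine ⟨⋃ n, (S n).1, .iUnion fun n => (S n).2.1, ?_, subset_iUnion (fun n => (S n).1) 0, ?_⟩
  · intro x hx y hxy
    obtain ⟨n, hn⟩ := mem_iUnion.1 hx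
    exact mem_iUnion.2 ⟨n + 1, hF (S n) ⟨x, hn, hxy⟩⟩
  · refine iUnion_subset fun n x hx => ?_
    by_contra hc
    exact Set.disjoint_left.1 (S n).2.2 hx ⟨x, hc, hr.refl x⟩

/-- valid partial couplings -/
def GValid {X : Type*} [MeasurableSpace X] (B : Set (X × X)) (μ ν : Measure X)
    (ω : Measure (X × X)) : Prop :=
  ω Bᶜ = 0 ∧ ω.fst ≤ μ ∧ ω.snd ≤ ν

lemma GValid.univ_le {X : Type*} [MeasurableSpace X] {B : Set (X × X)} {μ ν : Measure X}
    {ω : Measure (X × X)} (h : GValid B μ ν ω) : ω univ ≤ μ univ := by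
  rw [← Measure.fst_univ]; exact h.2.1 univ

lemma exists_maximal {X : Type*} [MeasurableSpace X] (B : Set (X × X)) (μ ν : Measure X)
    [IsFiniteMeasure μ] :
    ∃ ω, GValid B μ ν ω ∧ ∀ η, GValid B μ ν (ω + η) → η = 0 := by
  have step : ∀ (n : ℕ) (ω : {ω : Measure (X × X) // GValid B μ ν ω}),
      ∃ η : Measure (X × X), GValid B μ ν (ω.1 + η) ∧
        ∀ η', GValid B μ ν (ω.1 + η') → η' univ ≤ η univ + (n + 1 : ENNReal)⁻¹ := by
    intro n ω
    let T : Set ENNReal := {c | ∃ η, GValid B μ ν (ω.1 + η) ∧ c = η univ}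
    have hne : T.Nonempty := ⟨_, 0, by simpa using ω.2, rfl⟩
    have hfin : sSup T ≠ ⊤ := by
      refine ne_top_of_le_ne_top (measure_ne_top μ univ) (sSup_le ?_)
      rintro _ ⟨η, hη, rfl⟩
      refine le_trans ?_ hη.univ_le
      simp
    have hle : ∀ η', GValid B μ ν (ω.1 + η') → η' univ ≤ sSup T :=
      fun η' hη' => le_sSup ⟨η', hη', rfl⟩
    by_cases h0 : sSup T = 0
    · refine ⟨0, by simpa using ω.2, fun η' hη' => ?_⟩
      exact ((hle η' hη').trans h0.le).trans zero_le
    · have hlt : sSup T - (n + 1 : ENNReal)⁻¹ < sSup T := ENNReal.sub_lt_self hfin h0 (by simp)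
      obtain ⟨_, ⟨η, hη, rfl⟩, hlt2⟩ := lt_sSup_iff.1 hlt
      exact ⟨η, hη, fun η' hη' => (hle η' hη').trans (tsub_le_iff_right.1 hlt2.le)⟩
  choose F hF1 hF2 using step
  let W : ℕ → {ω : Measure (X × X) // GValid B μ ν ω} := fun n =>
    Nat.rec ⟨0, by simp [GValid, Measure.zero_le]⟩ (fun n ω => ⟨ω.1 + F n ω, hF1 n ω⟩) n
  let η : ℕ → Measure (X × X) := fun n => F n (W n)
  have hW0 : (W 0).1 = 0 := rfl
  have hW1 : ∀ n, (W (n + 1)).1 = (W n).1 + η n := fun n => rfl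
  have hWs : ∀ n s, (W n).1 s = ∑ i ∈ Finset.range n, η i s := by
    intro n s
    induction n with
    | zero => simp [hW0]
    | succ n ih => rw [hW1, Finset.sum_range_succ, Measure.add_apply, ih]
  let ω := Measure.sum η
  have hωs : ∀ s, MeasurableSet s → ω s = ∑' i, η i s := fun s hs => Measure.sum_apply _ hs
  have hω : GValid B μ ν ω := by
    refine ⟨?_, ?_, ?_⟩
    · rw [Measure.sum_apply_eq_zero]
      intro i
      have := (W (i + 1)).2.1
      rw [hW1, Measure.add_apply] at this
      exact (add_eq_zero.1 this).2
    · refine Measure.le_iff.2 fun s hs => ?_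
      rw [Measure.fst_apply hs, hωs _ (measurable_fst hs)]
      refine ENNReal.tsum_le_of_sum_range_le fun n => ?_
      rw [← hWs, ← Measure.fst_apply hs]
      exact (W n).2.2.1 s
    · refine Measure.le_iff.2 fun s hs => ?_
      rw [Measure.snd_apply hs, hωs _ (measurable_snd hs)]
      refine ENNReal.tsum_le_of_sum_range_le fun n => ?_
      rw [← hWs, ← Measure.snd_apply hs]
      exact (W n).2.2.2 s
  refine ⟨ω, hω, fun ρ hρ => ?_⟩
  -- `η n univ → 0`
  have hsum : ∑' i, η i univ ≠ ⊤ := by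
    rw [← hωs _ .univ]
    exact ne_top_of_le_ne_top (measure_ne_top μ univ) hω.univ_le
  have hle : ∀ n, ρ univ ≤ η n univ + (n + 1 : ENNReal)⁻¹ := by
    intro n
    refine hF2 n (W n) ρ ?_
    have hWω : (W n).1 ≤ ω := by
      refine Measure.le_iff.2 fun s hs => ?_
      rw [hWs, hωs s hs]
      exact ENNReal.sum_le_tsum _
    have hle2 : (W n).1 + ρ ≤ ω + ρ := add_le_add_left hWω ρ
    refine ⟨le_antisymm ((hle2 _).trans hρ.1.le) zero_le, ?_, ?_⟩
    · exact (Measure.map_mono hle2 measurable_fst).trans hρ.2.1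
    · exact (Measure.map_mono hle2 measurable_snd).trans hρ.2.2
  have hlim : Tendsto (fun n : ℕ => η n univ + (n + 1 : ENNReal)⁻¹) atTop (𝓝 (0 + 0)) := by
    refine (ENNReal.tendsto_atTop_zero_of_tsum_ne_top hsum).add ?_
    have := (tendsto_add_atTop_iff_nat 1).2 ENNReal.tendsto_inv_nat_nhds_zero
    simpa using this
  rw [add_zero] at hlim
  have := ge_of_tendsto' hlim hle
  exact Measure.measure_univ_eq_zero.1 (le_antisymm this zero_le)

lemma coupling_invariant {X : Type*} [MeasurableSpace X] (r : X → X → Prop) (hr : Equivalence r)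
    {ω : Measure (X × X)} (h : ω {p : X × X | r p.1 p.2}ᶜ = 0) {B : Set X} (hB : MeasurableSet B)
    (hc : RClosed r B) : ω.fst B = ω.snd B := by
  rw [Measure.fst_apply hB, Measure.snd_apply hB]
  refine measure_congr ?_
  have : ∀ᵐ p ∂ω, r p.1 p.2 := h
  filter_upwards [this] with p hp
  exact propext ⟨fun h => hc h hp, fun h => hc h (hr.symm hp)⟩

/-- For a Borel equivalence relation on a standard Borel space, the liftings `Γ`
(agreement on `R`-closed measurable sets) and `Θ` (existence of a coupling concentrated
on `R`) of the relation to probability measures coincide. -/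
theorem gammaRel_iff_thetaRel {X : Type*} [MeasurableSpace X] [StandardBorelSpace X]
    (r : X → X → Prop) (hr : Equivalence r)
    (hBorel : MeasurableSet {p : X × X | r p.1 p.2})
    (μ ν : Measure X) [IsProbabilityMeasure μ] [IsProbabilityMeasure ν] :
    GammaRel r μ ν ↔
      ∃ ω : Measure (X × X), IsProbabilityMeasure ω ∧ ω.fst = μ ∧ ω.snd = ν ∧
        ∃ S : Set (X × X), MeasurableSet S ∧ (∀ p ∈ S, r p.1 p.2) ∧ ω S = 1 := by
  constructor
  · intro hΓ
    letI := upgradeStandardBorel X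
    obtain ⟨ω, hω, hmax⟩ := exists_maximal {p : X × X | r p.1 p.2} μ ν
    have hωfin : IsFiniteMeasure ω :=
      ⟨lt_of_le_of_lt hω.univ_le (measure_lt_top μ univ)⟩
    have e1 : μ - ω.fst + ω.fst = μ := Measure.sub_add_cancel_of_le hω.2.1
    have e2 : ν - ω.snd + ω.snd = ν := Measure.sub_add_cancel_of_le hω.2.2
    set μ' := μ - ω.fst with hμ'
    set ν' := ν - ω.snd with hν'
    have hfμ : IsFiniteMeasure μ' := isFiniteMeasure_of_le μ Measure.sub_le
    have hfν : IsFiniteMeasure ν' := isFiniteMeasure_of_le ν Measure.sub_le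
    have hD : gD μ' ν' {p : X × X | r p.1 p.2} ≤ 0 := by
      by_contra! hpos
      obtain ⟨η, h0, hfin, h1, h2, h3⟩ := exists_coupling_of_gD_pos hBorel.analyticSet hpos
      refine h0 (hmax η ⟨?_, ?_, ?_⟩)
      · rw [Measure.add_apply, hω.1, h1, add_zero]
      · have : (ω + η).fst = η.fst + ω.fst := by
          rw [add_comm]; exact Measure.map_add _ _ measurable_fst
        rw [this, ← e1]
        exact add_le_add_left h2 _
      · have : (ω + η).snd = η.snd + ω.snd := by
          rw [add_comm]; exact Measure.map_add _ _ measurable_snd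
        rw [this, ← e2]
        exact add_le_add_left h3 _
    have hinv : ∀ B, MeasurableSet B → RClosed r B → μ' B = ν' B := by
      intro B hB hc
      have h1 := hΓ B hB hc
      rw [← e1, ← e2, Measure.add_apply, Measure.add_apply,
        coupling_invariant r hr hω.1 hB hc] at h1
      exact (ENNReal.add_left_inj (measure_ne_top _ _)).1 h1
    obtain ⟨A, C, hcov, hA, hC⟩ := exists_null_cover hD
    obtain ⟨B, hB, hBc, hAB, hBC⟩ := exists_invariant_sep r hr hBorel hcov
    have hμ0 : μ' univ = 0 := by
      have h1 : μ' B = 0 := by rw [hinv B hB hBc]; exact measure_mono_null hBC hC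
      have h2 : μ' (A ∪ B) = 0 := measure_union_null hA h1
      refine measure_mono_null (fun x _ => ?_) h2
      by_cases hx : x ∈ A
      exacts [.inl hx, .inr (hAB hx)]
    have hν0 : ν' univ = 0 := by
      rw [← hinv univ .univ (fun _ _ _ _ => mem_univ _)]; exact hμ0
    rw [Measure.measure_univ_eq_zero] at hμ0 hν0
    rw [hμ0, zero_add] at e1
    rw [hν0, zero_add] at e2
    have hprob : IsProbabilityMeasure ω := ⟨by rw [← Measure.fst_univ, e1]; exact measure_univ⟩
    exact ⟨ω, hprob, e1, e2, _, hBorel, fun p hp => hp, (prob_compl_eq_zero_iff hBorel).1 hω.1⟩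
  · rintro ⟨ω, hω, rfl, rfl, S, hS, hSr, hS1⟩ B hB hc
    refine coupling_invariant r hr ?_ hB hc
    refine measure_mono_null (compl_subset_compl.2 fun p hp => hSr p hp)
      ((prob_compl_eq_zero_iff hS).2 hS1)
end

section
/- Let X be a Polish space and R a closed equivalence relation on X (i.e., its graph is closed in X × X). Let (μₙ) and (νₙ) be sequences of probability measures converging weakly to μ and ν respectively, such that for every n there exists a coupling πₙ of μₙ and νₙ concentrated on R. Then there exists a coupling π of μ and ν concentrated on R; in other words, the coupling-based relation lifting ΘR is closed under weak limits. -/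
open MeasureTheory Filter Topology

/-- Weak convergence of a sequence of measures. -/
def WeakTendsto {α : Type*} [TopologicalSpace α] [MeasurableSpace α]
    (μ : ℕ → Measure α) (ν : Measure α) : Prop :=
  ∀ f : BoundedContinuousFunction α ℝ,
    Tendsto (fun n => ∫ x, f x ∂(μ n)) atTop (𝓝 (∫ x, f x ∂ν))

theorem tight_range_aux {X : Type*}
    [TopologicalSpace X] [PolishSpace X] [MeasurableSpace X] [BorelSpace X]
    (M : ℕ → ProbabilityMeasure X) (m : ProbabilityMeasure X) (h : Tendsto M atTop (𝓝 m)) :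
    IsTightMeasureSet {((μ : ProbabilityMeasure X) : Measure X) | μ ∈ Set.range M} := by
  letI := TopologicalSpace.upgradeIsCompletelyMetrizable X
  apply isTightMeasureSet_of_isCompact_closure
  exact h.isCompact_insert_range.closure_of_subset (Set.subset_insert _ _)

/-- For a closed equivalence relation `r` on a Polish space, the coupling-based relation
lifting `Θr` is closed under weak limits: if `μₙ → μ` and `νₙ → ν` weakly and each pair
`(μₙ, νₙ)` admits a coupling concentrated on `r`, so does `(μ, ν)`. -/
theorem thetaRel_closed_under_weak_limits {X : Type*}
    [TopologicalSpace X] [PolishSpace X] [MeasurableSpace X] [BorelSpace X]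
    (r : X → X → Prop) (hr : Equivalence r)
    (hclosed : IsClosed {p : X × X | r p.1 p.2})
    (μ ν : ℕ → Measure X) (μl νl : Measure X)
    [∀ n, IsProbabilityMeasure (μ n)] [∀ n, IsProbabilityMeasure (ν n)]
    [IsProbabilityMeasure μl] [IsProbabilityMeasure νl]
    (hμ : WeakTendsto μ μl) (hν : WeakTendsto ν νl)
    (hcpl : ∀ n, ∃ π : Measure (X × X), IsProbabilityMeasure π ∧
      π.fst = μ n ∧ π.snd = ν n ∧ π {p : X × X | r p.1 p.2} = 1) :
    ∃ π : Measure (X × X), IsProbabilityMeasure π ∧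
      π.fst = μl ∧ π.snd = νl ∧ π {p : X × X | r p.1 p.2} = 1 := by
  let M : ℕ → ProbabilityMeasure X := fun n => ⟨μ n, inferInstance⟩
  let N : ℕ → ProbabilityMeasure X := fun n => ⟨ν n, inferInstance⟩
  let m : ProbabilityMeasure X := ⟨μl, inferInstance⟩
  let n : ProbabilityMeasure X := ⟨νl, inferInstance⟩
  have hM : Tendsto M atTop (𝓝 m) :=
    ProbabilityMeasure.tendsto_iff_forall_integral_tendsto.2 hμ
  have hN : Tendsto N atTop (𝓝 n) :=
    ProbabilityMeasure.tendsto_iff_forall_integral_tendsto.2 hν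
  choose π hπ h1 h2 h3 using hcpl
  let P : ℕ → ProbabilityMeasure (X × X) := fun n => ⟨π n, hπ n⟩
  have hT : IsTightMeasureSet
      {((μ : ProbabilityMeasure (X × X)) : Measure (X × X)) | μ ∈ Set.range P} := by
    apply IsTightMeasureSet.prodMk
    · refine (tight_range_aux M m hM).subset ?_
      rintro _ ⟨_, ⟨_, ⟨k, rfl⟩, rfl⟩, rfl⟩
      exact ⟨M k, ⟨k, rfl⟩, (h1 k).symm⟩
    · refine (tight_range_aux N n hN).subset ?_
      rintro _ ⟨_, ⟨_, ⟨k, rfl⟩, rfl⟩, rfl⟩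
      exact ⟨N k, ⟨k, rfl⟩, (h2 k).symm⟩
  have hc := isCompact_closure_of_isTightMeasureSet hT
  let L : Ultrafilter ℕ := hyperfilter ℕ
  have hL : (L : Filter ℕ) ≤ atTop := by
    rw [← Nat.cofinite_eq_atTop]; exact hyperfilter_le_cofinite
  obtain ⟨p, -, hp⟩ := hc.ultrafilter_le_nhds' (L.map P)
    (Filter.Eventually.of_forall (f := (L : Filter ℕ)) fun k => subset_closure ⟨k, rfl⟩)
  have hp' : Tendsto P L (𝓝 p) := hp
  have e1 : p.map (f := Prod.fst) measurable_fst.aemeasurable = m := by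
    refine tendsto_nhds_unique
      ((ProbabilityMeasure.continuous_map continuous_fst).continuousAt.tendsto.comp hp') ?_
    refine (hM.mono_left hL).congr fun k => ?_
    exact Subtype.ext (h1 k).symm
  have e2 : p.map (f := Prod.snd) measurable_snd.aemeasurable = n := by
    refine tendsto_nhds_unique
      ((ProbabilityMeasure.continuous_map continuous_snd).continuousAt.tendsto.comp hp') ?_
    refine (hN.mono_left hL).congr fun k => ?_
    exact Subtype.ext (h2 k).symm
  refine ⟨p, inferInstance, congrArg Subtype.val e1, congrArg Subtype.val e2, ?_⟩
  apply le_antisymm prob_le_one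
  have := ProbabilityMeasure.limsup_measure_closed_le_of_tendsto hp' hclosed
  have h3' : ∀ k, (P k : Measure (X × X)) {p : X × X | r p.1 p.2} = 1 := h3
  simpa [h3'] using this
end

section
/- Let S be a standard Borel space and let (h_a)_{a ∈ A} be a family of Feller-continuous sub-probability kernels S ⇝ S indexed by a Polish action space A, such that for each fixed s the map a ↦ h_a(s) is also weakly continuous. Let E be an equivalence relation on S which is a state bisimulation, i.e., s E t implies h_a(s) ΓE h_a(t) for all a ∈ A, and suppose its graph is closed. If A' ⊆ A is dense and E' is a closed equivalence relation such that s E' t implies h_a(s) ΘE' h_a(t) for all a ∈ A', then s E' t implies h_a(s) ΘE' h_a(t) for all a ∈ A (the bisimulation condition extends from a dense set of actions to all actions). -/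
open MeasureTheory Filter Topology

/-- The coupling-based relation lifting `Θ`: there is a coupling of `μ` and `ν`
concentrated on a measurable subset of the relation. -/
def ThetaRel {X : Type*} [MeasurableSpace X] (r : X → X → Prop) (μ ν : Measure X) : Prop :=
  ∃ ω : Measure (X × X), ω.fst = μ ∧ ω.snd = ν ∧
    ∃ S : Set (X × X), MeasurableSet S ∧ (∀ p ∈ S, r p.1 p.2) ∧ ω S = ω Set.univ

/-- A kernel is Feller continuous when the associated map into measures is continuous
with respect to the topology of weak convergence. -/
def FellerCont {X Z : Type*} [TopologicalSpace X] [TopologicalSpace Z] [MeasurableSpace Z]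
    (k : X → Measure Z) : Prop :=
  ∀ g : BoundedContinuousFunction Z ℝ, Continuous fun x => ∫ z, g z ∂(k x)

theorem aux_coupling_limit {S : Type*}
    [TopologicalSpace S] [PolishSpace S] [MeasurableSpace S] [BorelSpace S]
    (P Q : ℕ → ProbabilityMeasure S) (p q : ProbabilityMeasure S)
    (hP : Tendsto P atTop (𝓝 p)) (hQ : Tendsto Q atTop (𝓝 q))
    (W : ℕ → ProbabilityMeasure (S × S))
    (h1 : ∀ n, (W n : Measure (S × S)).fst = P n)
    (h2 : ∀ n, (W n : Measure (S × S)).snd = Q n)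
    (C : Set (S × S)) (hC : IsClosed C) (hW : ∀ n, (W n : Measure (S × S)) C = 1) :
    ∃ w : ProbabilityMeasure (S × S), (w : Measure (S × S)).fst = p ∧
      (w : Measure (S × S)).snd = q ∧ (w : Measure (S × S)) C = 1 := by
  let _ := TopologicalSpace.upgradeIsCompletelyMetrizable S
  have tight : ∀ (R : ℕ → ProbabilityMeasure S) (r : ProbabilityMeasure S),
      Tendsto R atTop (𝓝 r) →
      IsTightMeasureSet {((μ : ProbabilityMeasure S) : Measure S) | μ ∈ Set.range R} := by
    intro R r hR
    apply isTightMeasureSet_of_isCompact_closure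
    have hK := hR.isCompact_insert_range
    exact hK.of_isClosed_subset isClosed_closure
      (closure_minimal (Set.subset_insert _ _) hK.isClosed)
  have tW : IsTightMeasureSet
      {((μ : ProbabilityMeasure (S × S)) : Measure (S × S)) | μ ∈ Set.range W} := by
    apply IsTightMeasureSet.prodMk
    · refine (tight P p hP).subset ?_
      rintro _ ⟨_, ⟨_, ⟨n, rfl⟩, rfl⟩, rfl⟩
      exact ⟨P n, ⟨n, rfl⟩, (h1 n).symm⟩
    · refine (tight Q q hQ).subset ?_
      rintro _ ⟨_, ⟨_, ⟨n, rfl⟩, rfl⟩, rfl⟩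
      exact ⟨Q n, ⟨n, rfl⟩, (h2 n).symm⟩
  have hcomp := isCompact_closure_of_isTightMeasureSet tW
  let L : Ultrafilter ℕ := Ultrafilter.of atTop
  have hL : (L : Filter ℕ) ≤ atTop := Ultrafilter.of_le atTop
  obtain ⟨w, -, hw⟩ := hcomp.ultrafilter_le_nhds (L.map W) (by
    rw [le_principal_iff]
    exact Filter.mem_of_superset (Filter.range_mem_map) subset_closure)
  have hw' : Tendsto W L (𝓝 w) := hw
  refine ⟨w, ?_, ?_, ?_⟩
  · have t := ProbabilityMeasure.tendsto_map_of_tendsto_of_continuous W w hw' continuous_fst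
    have e : (fun i ↦ (W i).map (continuous_fst.measurable.aemeasurable)) = P := by
      funext i
      apply Subtype.ext
      exact h1 i
    rw [e] at t
    have e' := tendsto_nhds_unique t (hP.mono_left hL)
    exact congrArg (fun z : ProbabilityMeasure S => (z : Measure S)) e'
  · have t := ProbabilityMeasure.tendsto_map_of_tendsto_of_continuous W w hw' continuous_snd
    have e : (fun i ↦ (W i).map (continuous_snd.measurable.aemeasurable)) = Q := by
      funext i
      apply Subtype.ext
      exact h2 i
    rw [e] at t
    have e' := tendsto_nhds_unique t (hQ.mono_left hL)
    exact congrArg (fun z : ProbabilityMeasure S => (z : Measure S)) e'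
  · have t := ProbabilityMeasure.limsup_measure_closed_le_of_tendsto hw' hC
    simp only [hW, limsup_const] at t
    exact le_antisymm prob_le_one t

theorem aux_theta_limit {S : Type*}
    [TopologicalSpace S] [PolishSpace S] [MeasurableSpace S] [BorelSpace S]
    (r : S → S → Prop) (hr : IsClosed {p : S × S | r p.1 p.2})
    (M N : ℕ → FiniteMeasure S) (m n : FiniteMeasure S)
    (hM : Tendsto M atTop (𝓝 m)) (hN : Tendsto N atTop (𝓝 n))
    (hMN : ∀ i, ThetaRel r (M i : Measure S) (N i)) :
    ThetaRel r (m : Measure S) n := by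
  have fstu : ∀ ω : Measure (S × S), ω.fst Set.univ = ω Set.univ := fun ω => Measure.fst_univ
  have sndu : ∀ ω : Measure (S × S), ω.snd Set.univ = ω Set.univ := fun ω => Measure.snd_univ
  have hmass : ∀ i, (M i).mass = (N i).mass := by
    intro i
    obtain ⟨ω, e1, e2, -⟩ := hMN i
    rw [← ENNReal.coe_inj, FiniteMeasure.ennreal_mass, FiniteMeasure.ennreal_mass, ← e1, ← e2,
      fstu, sndu]
  have hmn : m.mass = n.mass := by
    refine tendsto_nhds_unique hM.mass ?_
    simp only [hmass]
    exact hN.mass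
  by_cases hm : m = 0
  · have hn : n = 0 := by
      rw [← FiniteMeasure.mass_zero_iff, ← hmn, hm, FiniteMeasure.zero_mass]
    subst hm
    subst hn
    exact ⟨0, by simp, by simp, ∅, MeasurableSet.empty, by simp, by simp⟩
  have hm0 : m.mass ≠ 0 := (FiniteMeasure.mass_nonzero_iff m).2 hm
  have hn : n ≠ 0 := (FiniteMeasure.mass_nonzero_iff n).1 (hmn ▸ hm0)
  have hS : Nonempty S := by
    by_contra hne
    rw [not_nonempty_iff] at hne
    apply hm0
    rw [FiniteMeasure.mass_zero_iff]
    apply Subtype.ext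
    exact Measure.eq_zero_of_isEmpty _
  have hev : ∀ᶠ i in atTop, (M i).mass ≠ 0 := hM.mass.eventually_ne hm0
  obtain ⟨k, hk⟩ := eventually_atTop.1 hev
  choose ω e1 e2 T hT hTr hωT using hMN
  have hfin : ∀ i, IsFiniteMeasure (ω i) := by
    intro i
    refine ⟨?_⟩
    rw [← fstu, e1]
    exact measure_lt_top _ _
  let F : ℕ → FiniteMeasure (S × S) := fun i => ⟨ω i, hfin i⟩
  have hF : ∀ i, (F i).mass = (M i).mass := by
    intro i
    rw [← ENNReal.coe_inj, FiniteMeasure.ennreal_mass, FiniteMeasure.ennreal_mass, ← e1, fstu]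
    rfl
  have key := tendsto_add_atTop_iff_nat (f := fun i => (M i).normalize) (l := 𝓝 m.normalize) k
  have tM := key.2 (FiniteMeasure.tendsto_normalize_of_tendsto hM hm)
  have key2 := tendsto_add_atTop_iff_nat (f := fun i => (N i).normalize) (l := 𝓝 n.normalize) k
  have tN := key2.2 (FiniteMeasure.tendsto_normalize_of_tendsto hN hn)
  have nzM : ∀ i, M (i + k) ≠ 0 := fun i =>
    (FiniteMeasure.mass_nonzero_iff _).1 (hk _ (Nat.le_add_left _ _))
  have nzN : ∀ i, N (i + k) ≠ 0 := fun i =>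
    (FiniteMeasure.mass_nonzero_iff _).1 (hmass _ ▸ hk _ (Nat.le_add_left _ _))
  have nzF : ∀ i, F (i + k) ≠ 0 := fun i =>
    (FiniteMeasure.mass_nonzero_iff _).1 ((hF _).symm ▸ hk _ (Nat.le_add_left _ _))
  have fF : ∀ i, (F i : Measure (S × S)) = ω i := fun i => rfl
  obtain ⟨w, w1, w2, w3⟩ := aux_coupling_limit _ _ _ _ tM tN (fun i => (F (i + k)).normalize)
    (by
      intro i
      rw [FiniteMeasure.toMeasure_normalize_eq_of_nonzero _ (nzF i),
        FiniteMeasure.toMeasure_normalize_eq_of_nonzero _ (nzM i), hF, fF, ← e1,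
        Measure.fst, Measure.fst, Measure.map_smul])
    (by
      intro i
      rw [FiniteMeasure.toMeasure_normalize_eq_of_nonzero _ (nzF i),
        FiniteMeasure.toMeasure_normalize_eq_of_nonzero _ (nzN i), hF, fF, hmass, ← e2,
        Measure.snd, Measure.snd, Measure.map_smul])
    _ hr (by
      intro i
      have h1 : (((F (i + k)).normalize : ProbabilityMeasure (S × S)) : Measure (S × S))
          (T (i + k)) = 1 := by
        rw [← measure_univ (μ := (((F (i + k)).normalize : ProbabilityMeasure (S × S)) :
          Measure (S × S))), FiniteMeasure.toMeasure_normalize_eq_of_nonzero _ (nzF i), fF,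
          Measure.smul_apply, Measure.smul_apply, hωT]
      exact le_antisymm prob_le_one (h1 ▸ measure_mono (fun p hp => hTr _ p hp)))
  refine ⟨m.mass • (w : Measure (S × S)), ?_, ?_, _, hr.measurableSet, fun p hp => hp, ?_⟩
  · rw [Measure.fst, Measure.map_smul, ← Measure.fst, w1]
    exact (congrArg Subtype.val m.self_eq_mass_smul_normalize).symm
  · rw [Measure.snd, Measure.map_smul, ← Measure.snd, w2, hmn]
    exact (congrArg Subtype.val n.self_eq_mass_smul_normalize).symm
  · rw [Measure.smul_apply, Measure.smul_apply, w3, measure_univ]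

/-- For a Feller-continuous LMP, the bisimulation condition extends from a dense set of
actions to all actions: if `E'` is a closed equivalence relation and `s E' t` implies
`h_a(s) ΘE' h_a(t)` for all `a` in a dense subset `A'`, then this holds for all `a`. -/
theorem bisim_extends_from_dense_actions {S A : Type*}
    [TopologicalSpace S] [PolishSpace S] [MeasurableSpace S] [BorelSpace S]
    [TopologicalSpace A] [PolishSpace A]
    (h : A → S → Measure S)
    (hsub : ∀ a s, h a s Set.univ ≤ 1)
    (hfin : ∀ a s, IsFiniteMeasure (h a s))
    (hFellerS : ∀ a, FellerCont (h a))
    (hFellerA : ∀ s, FellerCont fun a => h a s)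
    (E : S → S → Prop) (hE : Equivalence E)
    (hEclosed : IsClosed {p : S × S | E p.1 p.2})
    (hEbisim : ∀ s t, E s t → ∀ a, GammaRel E (h a s) (h a t))
    (A' : Set A) (hdense : Dense A')
    (E' : S → S → Prop) (hE' : Equivalence E')
    (hE'closed : IsClosed {p : S × S | E' p.1 p.2})
    (hbisim' : ∀ s t, E' s t → ∀ a ∈ A', ThetaRel E' (h a s) (h a t)) :
    ∀ s t, E' s t → ∀ a, ThetaRel E' (h a s) (h a t) := by
  intro s t hst a
  obtain ⟨u, hu, hua⟩ := mem_closure_iff_seq_limit.1 (hdense a)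
  refine aux_theta_limit E' hE'closed (fun i => ⟨h (u i) s, hfin _ _⟩)
    (fun i => ⟨h (u i) t, hfin _ _⟩) ⟨h a s, hfin _ _⟩ ⟨h a t, hfin _ _⟩ ?_ ?_
    (fun i => hbisim' s t hst _ (hu i))
  · refine FiniteMeasure.tendsto_iff_forall_integral_tendsto.2 ?_
    exact fun g => ((hFellerA s g).tendsto a).comp hua
  · refine FiniteMeasure.tendsto_iff_forall_integral_tendsto.2 ?_
    exact fun g => ((hFellerA t g).tendsto a).comp hua
end
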